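/- Lax representation for the dual system in parabolic coordinates (with time change). Let x ≠ 0, H̃ = (p_x² + p_y²)/x, and for λ ≠ 0 define L̃(λ) = [[p_x + y·p_y/(2λ), λ − x − y²/(4λ)], [p_y²/λ + H̃, −(p_x + y·p_y/(2λ))]] and Ã = (1/x)·[[0,1],[0,0]]. Then for every λ ≠ 0 and every matrix entry (i,j), {H̃, L̃(λ)_{ij}} = ([Ã, L̃(λ)])_{ij}. -/

import Mathlib

/-- The canonical Poisson bracket of two functions of `(x, y, pₓ, p_y)` on `ℝ⁴`:
`{F,G} = ∂F/∂pₓ·∂G/∂x − ∂F/∂x·∂G/∂pₓ + ∂F/∂p_y·∂G/∂y − ∂F/∂y·∂G/∂p_y`. -/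
noncomputable def pb (F G : ℝ → ℝ → ℝ → ℝ → ℝ) (x y px py : ℝ) : ℝ :=
    deriv (fun s => F x y s py) px * deriv (fun s => G s y px py) x
  - deriv (fun s => F s y px py) x * deriv (fun s => G x y s py) px
  + deriv (fun s => F x y px s) py * deriv (fun s => G x s px py) y
  - deriv (fun s => F x s px py) y * deriv (fun s => G x y px s) py

/-- The dual Hamiltonian `H̃ = (pₓ² + p_y²)/x` obtained by the non-canonical
change of the time variable from the parabolic free system. -/
noncomputable def Ham : ℝ → ℝ → ℝ → ℝ → ℝ := fun x _ px py => (px ^ 2 + py ^ 2) / x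

/-- The dual Lax matrix in parabolic coordinates: the parabolic Lax matrix with
`H̃` added to the lower-left entry. -/
noncomputable def L (lam x y px py : ℝ) : Matrix (Fin 2) (Fin 2) ℝ :=
  !![px + y * py / (2 * lam), lam - x - y ^ 2 / (4 * lam);
     py ^ 2 / lam + Ham x y px py, -(px + y * py / (2 * lam))]

/-- The constant part of the second Lax matrix; the second Lax matrix is
`Ã = (1/x) • A`. -/
noncomputable def A : Matrix (Fin 2) (Fin 2) ℝ := !![0, 1; 0, 0]

theorem aux_quad (f : ℝ → ℝ) (a b c t : ℝ) (h : ∀ s, f s = a * s ^ 2 + b * s + c) :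
    deriv f t = 2 * a * t + b := by
  have hf : f = fun s => a * s ^ 2 + b * s + c := funext h
  rw [hf]
  have h1 := ((((hasDerivAt_id t).pow 2).const_mul a).add
    ((hasDerivAt_id t).const_mul b)).add_const c
  refine HasDerivAt.deriv (h1.congr_deriv ?_)
  simp
  ring

theorem aux_inv (f : ℝ → ℝ) (a b c t : ℝ) (ht : t ≠ 0) (h : ∀ s, f s = a * s⁻¹ + b * s + c) :
    deriv f t = -a / t ^ 2 + b := by
  have hf : f = fun s => a * s⁻¹ + b * s + c := funext h
  rw [hf]
  have h1 := (((hasDerivAt_inv ht).const_mul a).add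
    ((hasDerivAt_id t).const_mul b)).add_const c
  refine HasDerivAt.deriv (h1.congr_deriv ?_)
  simp
  ring

theorem aux_pb (G : ℝ → ℝ → ℝ → ℝ → ℝ) (x y px py : ℝ) (hx : x ≠ 0) :
    pb Ham G x y px py = 2 * px / x * deriv (fun s => G s y px py) x
      + (px ^ 2 + py ^ 2) / x ^ 2 * deriv (fun s => G x y s py) px
      + 2 * py / x * deriv (fun s => G x s px py) y := by
  unfold pb
  rw [aux_quad (fun s => Ham x y s py) (1 / x) 0 (py ^ 2 / x) px (by intro s; simp only [Ham]; ring),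
    aux_quad (fun s => Ham x y px s) (1 / x) 0 (px ^ 2 / x) py (by intro s; simp only [Ham]; ring),
    aux_quad (fun s => Ham x s px py) 0 0 ((px ^ 2 + py ^ 2) / x) y
      (by intro s; simp only [Ham]; ring),
    aux_inv (fun s => Ham s y px py) (px ^ 2 + py ^ 2) 0 0 x hx
      (by intro s; simp only [Ham]; ring)]
  ring

/-- Lax representation for the dual system in parabolic coordinates (with time
change): the Lax equation `{H̃, L̃(λ)} = [(1/x) • A, L̃(λ)]` holds entrywise for
`x ≠ 0` and `λ ≠ 0`. -/
theorem lax_dual_parabolic :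
    ∀ (lam x y px py : ℝ), x ≠ 0 → lam ≠ 0 → ∀ (i j : Fin 2),
      pb Ham (fun x y px py => L lam x y px py i j) x y px py =
        (((1 / x) • A) * L lam x y px py - L lam x y px py * ((1 / x) • A)) i j := by
  intro lam x y px py hx hl i j
  rw [aux_pb _ x y px py hx]
  fin_cases i <;> fin_cases j <;>
    simp only [L, A, Fin.zero_eta, Fin.mk_one, Fin.isValue, Matrix.of_apply, Matrix.cons_val',
      Matrix.cons_val_zero, Matrix.cons_val_one, Matrix.cons_val_fin_one, Matrix.sub_apply,
      Matrix.mul_apply, Matrix.smul_apply, Fin.sum_univ_two, smul_eq_mul]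
  · rw [aux_quad _ 0 0 (px + y * py / (2 * lam)) x (by intro s; ring),
      aux_quad _ 0 1 (y * py / (2 * lam)) px (by intro s; ring),
      aux_quad _ 0 (py / (2 * lam)) px y (by intro s; ring)]
    simp only [Ham]
    field_simp
    ring
  · rw [aux_quad _ 0 (-1) (lam - y ^ 2 / (4 * lam)) x (by intro s; ring),
      aux_quad _ 0 0 (lam - x - y ^ 2 / (4 * lam)) px (by intro s; ring),
      aux_quad _ (-1 / (4 * lam)) 0 (lam - x) y (by intro s; ring)]
    field_simp
    ring
  · rw [aux_inv _ (px ^ 2 + py ^ 2) 0 (py ^ 2 / lam) x hx (by intro s; simp only [Ham]; ring),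
      aux_quad _ (1 / x) 0 (py ^ 2 / lam + py ^ 2 / x) px (by intro s; simp only [Ham]; ring),
      aux_quad _ 0 0 (py ^ 2 / lam + (px ^ 2 + py ^ 2) / x) y (by intro s; simp only [Ham]; ring)]
    field_simp
    ring
  · rw [aux_quad _ 0 0 (-(px + y * py / (2 * lam))) x (by intro s; ring),
      aux_quad _ 0 (-1) (-(y * py / (2 * lam))) px (by intro s; ring),
      aux_quad _ 0 (-(py / (2 * lam))) (-px) y (by intro s; ring)]
    simp only [Ham]
    field_simp
    ring
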